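/- arXiv:1601.02946 — 3 statements merged into one kernel-verified Lean document; each statement's English description precedes it below -/
import Mathlib

section
/- Let μ be a finite nonnegative Borel measure on [0,1] with μ([0,1]) > 0 and product coefficients a_I. For each n ≥ 0 let μ_n be the Borel measure on [0,1] with density μ([0,1])·∏_{I ∈ B_n}(1 + a_I h_I) with respect to Lebesgue measure dy. Then the measures μ_n converge weak-star to μ, i.e. ∫ f dμ_n → ∫ f dμ for every continuous f : [0,1] → ℝ. -/
open MeasureTheory Set Filter Topology

noncomputable section
attribute [local instance] Classical.propDecidable

/-- The dyadic interval `I(n,i) ⊆ [0,1]`: half-open, except the last one at each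
scale which is closed. -/
def dInt (n i : ℕ) : Set ℝ :=
  if i + 1 = 2 ^ n then Icc ((i : ℝ) / 2 ^ n) ((i + 1) / 2 ^ n)
  else Ico ((i : ℝ) / 2 ^ n) ((i + 1) / 2 ^ n)

/-- The Haar-like function `h_{I(n,i)}`: `1` on the left child, `-1` on the right
child, `0` outside `I(n,i)`. -/
def haar (n i : ℕ) (x : ℝ) : ℝ :=
  if x ∈ dInt (n + 1) (2 * i) then 1
  else if x ∈ dInt (n + 1) (2 * i + 1) then -1
  else 0

/-- Lebesgue measure `dy` on `[0,1]`. -/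
def dy : Measure ℝ := volume.restrict (Icc 0 1)

/-- The partial product density `∏_{I ∈ B_n} (1 + a_I h_I)` over all dyadic
intervals of scale at most `n`. -/
def partialProd (a : ℕ → ℕ → ℝ) (n : ℕ) (x : ℝ) : ℝ :=
  ∏ m ∈ Finset.range (n + 1), ∏ i ∈ Finset.range (2 ^ m), (1 + a m i * haar m i x)

/-- The measure with density `M · ∏_{I ∈ B_n}(1 + a_I h_I)` with respect to
Lebesgue measure on `[0,1]`. -/
def partialMeasure (M : ℝ) (a : ℕ → ℕ → ℝ) (n : ℕ) : Measure ℝ :=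
  dy.withDensity fun x => ENNReal.ofReal (M * partialProd a n x)

/-- `a` is the family of product coefficients of `μ`:
`μ(L(I)) = ½(1+a_I)μ(I)`, `μ(R(I)) = ½(1−a_I)μ(I)`, with the convention
`a_I = 0` whenever `μ(I) = 0`. -/
def IsProdCoeff (μ : Measure ℝ) (a : ℕ → ℕ → ℝ) : Prop :=
  ∀ n i, i < 2 ^ n →
    (μ (dInt n i) = 0 → a n i = 0) ∧
    (μ (dInt (n + 1) (2 * i))).toReal = (1 + a n i) / 2 * (μ (dInt n i)).toReal ∧
    (μ (dInt (n + 1) (2 * i + 1))).toReal = (1 - a n i) / 2 * (μ (dInt n i)).toReal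

/-- Weak-star convergence of finite Borel measures on `[0,1]`:
`∫ f dμₙ → ∫ f dμ` for every continuous `f : [0,1] → ℝ`. -/
def WeakStarTendsto (μs : ℕ → Measure ℝ) (μ : Measure ℝ) : Prop :=
  ∀ f : ℝ → ℝ, ContinuousOn f (Icc 0 1) →
    Tendsto (fun n => ∫ x, f x ∂(μs n)) atTop (𝓝 (∫ x, f x ∂μ))


/-!
The approximating measures `μ_n` have exactly the masses of `μ` on the dyadic intervals of scale
`n + 1`. On such an interval `J` each factor `1 + a_I h_I` is constant; it is `1` unless `I` is a
proper dyadic ancestor of `J`, and for an ancestor it is twice the fraction of `μ(I)` carried by the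
child of `I` containing `J`. The product telescopes, so the density of `μ_n` on `J` is the constant
`2 ^ (n + 1) * μ(J) = μ(J) / |J|` (`mul_prod_eq`), which gives `μ_n(J) = μ(J)`
(`partialMeasure_dInt`).

A continuous function on `[0,1]` is uniformly continuous. Once its oscillation on each dyadic
interval of scale `n + 1` is at most `ε`, its integrals against `μ_n` and `μ` are both within
`ε * μ([0,1])` of the same Riemann sum (`abs_integral_sub_sum_le`).
-/

lemma dInt_subset_Icc (n i : ℕ) : dInt n i ⊆ Icc ((i : ℝ) / 2 ^ n) ((i + 1) / 2 ^ n) := by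
  unfold dInt
  split_ifs
  · exact subset_rfl
  · exact Ico_subset_Icc_self

lemma Ico_subset_dInt (n i : ℕ) : Ico ((i : ℝ) / 2 ^ n) ((i + 1) / 2 ^ n) ⊆ dInt n i := by
  unfold dInt
  split_ifs
  · exact Ico_subset_Icc_self
  · exact subset_rfl

lemma measurableSet_dInt (n i : ℕ) : MeasurableSet (dInt n i) := by
  unfold dInt
  split_ifs
  · exact measurableSet_Icc
  · exact measurableSet_Ico

lemma dInt_zero : dInt 0 0 = Icc 0 1 := by
  simp [dInt]

lemma dInt_subset_unit {n i : ℕ} (hi : i < 2 ^ n) : dInt n i ⊆ Icc 0 1 := by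
  refine (dInt_subset_Icc n i).trans (Icc_subset_Icc (by positivity) ?_)
  rw [div_le_one (by positivity)]
  exact_mod_cast hi

lemma volume_dInt (n i : ℕ) : volume (dInt n i) = ENNReal.ofReal (1 / 2 ^ n) := by
  have h : ((i : ℝ) + 1) / 2 ^ n - i / 2 ^ n = 1 / 2 ^ n := by ring
  unfold dInt
  split_ifs <;> simp only [Real.volume_Icc, Real.volume_Ico, h]

lemma eq_of_mem_dInt {n i j : ℕ} (hi : i < 2 ^ n) (hj : j < 2 ^ n) {x : ℝ}
    (hxi : x ∈ dInt n i) (hxj : x ∈ dInt n j) : i = j := by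
  wlog h : i < j generalizing i j
  · rcases (not_lt.mp h).eq_or_lt with h | h
    · exact h.symm
    · exact (this hj hi hxj hxi h).symm
  -- `i` is not the last index, so `dInt n i` omits its right endpoint.
  have h1 : x < (i + 1) / 2 ^ n := by
    rw [dInt, if_neg (by lia)] at hxi
    exact hxi.2
  have h2 := (dInt_subset_Icc n j hxj).1
  have h3 : ((i : ℝ) + 1) / 2 ^ n ≤ j / 2 ^ n := by
    gcongr
    exact_mod_cast h
  linarith

/-- The parent of the dyadic interval with index `j` has index `j / 2`. -/
lemma dInt_succ_subset (n j : ℕ) : dInt (n + 1) j ⊆ dInt n (j / 2) := by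
  intro x hx
  have hp : (0 : ℝ) < 2 ^ n := by positivity
  have hb := dInt_subset_Icc _ _ hx
  rw [mem_Icc, div_le_iff₀ (by positivity), le_div_iff₀ (by positivity), pow_succ] at hb
  have h1 : (2 * (j / 2 : ℕ) : ℝ) ≤ j := by exact_mod_cast (by lia : 2 * (j / 2) ≤ j)
  have h2 : (j : ℝ) + 1 ≤ 2 * ((j / 2 : ℕ) + 1) := by
    exact_mod_cast (by lia : j + 1 ≤ 2 * (j / 2 + 1))
  have hl : ((j / 2 : ℕ) : ℝ) / 2 ^ n ≤ x := by rw [div_le_iff₀ hp]; linarith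
  by_cases hlast : j / 2 + 1 = 2 ^ n
  · rw [dInt, if_pos hlast]
    refine ⟨hl, ?_⟩
    rw [le_div_iff₀ hp]; linarith
  · rw [dInt, if_neg (by rw [pow_succ]; lia)] at hx
    rw [dInt, if_neg hlast]
    refine ⟨hl, ?_⟩
    have := hx.2
    rw [lt_div_iff₀ (by positivity), pow_succ] at this
    rw [lt_div_iff₀ hp]; linarith

lemma exists_mem_dInt (n : ℕ) {x : ℝ} (hx : x ∈ Icc (0 : ℝ) 1) :
    ∃ i < 2 ^ n, x ∈ dInt n i := by
  have hp : (0 : ℝ) < 2 ^ n := by positivity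
  rcases hx.2.eq_or_lt with rfl | h1
  · have h := Nat.sub_add_cancel (Nat.one_le_two_pow (n := n))
    have h' : ((2 ^ n - 1 : ℕ) : ℝ) + 1 = 2 ^ n := by exact_mod_cast h
    refine ⟨2 ^ n - 1, by lia, ?_⟩
    rw [dInt, if_pos h, mem_Icc, div_le_one hp, h', div_self hp.ne']
    exact ⟨by linarith, le_rfl⟩
  · have h0 : 0 ≤ x * 2 ^ n := mul_nonneg hx.1 hp.le
    refine ⟨⌊x * 2 ^ n⌋₊, ?_, Ico_subset_dInt _ _ ⟨?_, ?_⟩⟩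
    · rw [Nat.floor_lt h0]
      push_cast
      nlinarith
    · rw [div_le_iff₀ hp]
      exact Nat.floor_le h0
    · rw [lt_div_iff₀ hp]
      exact Nat.lt_floor_add_one _

lemma iUnion_dInt (n : ℕ) : ⋃ i ∈ Finset.range (2 ^ n), dInt n i = Icc 0 1 := by
  ext x
  simp only [mem_iUnion, Finset.mem_range, exists_prop]
  exact ⟨fun ⟨i, hi, hx⟩ => dInt_subset_unit hi hx, exists_mem_dInt n⟩

lemma pairwise_disjoint_dInt (n : ℕ) :
    (↑(Finset.range (2 ^ n)) : Set ℕ).Pairwise (Function.onFun Disjoint (dInt n)) := by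
  intro i hi j hj hij
  refine Set.disjoint_left.mpr fun x hxi hxj => hij (eq_of_mem_dInt ?_ ?_ hxi hxj)
  · simpa using hi
  · simpa using hj

/-- On the child `j` of the interval `j / 2`, the scale-`n` factor of the product is twice the
fraction of the parent's mass carried by that child. -/
lemma prod_scale_mul {μ : Measure ℝ} {a : ℕ → ℕ → ℝ} (ha : IsProdCoeff μ a) {n j : ℕ}
    (hj : j < 2 ^ (n + 1)) {x : ℝ} (hx : x ∈ dInt (n + 1) j) :
    (∏ i ∈ Finset.range (2 ^ n), (1 + a n i * haar n i x)) * (μ (dInt n (j / 2))).toReal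
      = 2 * (μ (dInt (n + 1) j)).toReal := by
  have hpow : 2 ^ (n + 1) = 2 ^ n * 2 := pow_succ 2 n
  have hmem : ∀ i < 2 ^ (n + 1), x ∈ dInt (n + 1) i ↔ j = i := fun i hi =>
    ⟨eq_of_mem_dInt hj hi hx, fun h => h ▸ hx⟩
  have hlt : j / 2 < 2 ^ n := by lia
  rw [Finset.prod_eq_single_of_mem (j / 2) (by simpa using hlt)]
  · obtain ⟨-, hL, hR⟩ := ha n (j / 2) hlt
    rw [haar, hmem _ (by lia), hmem _ (by lia)]
    rcases Nat.mod_two_eq_zero_or_one j with h | h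
    · have hj2 : 2 * (j / 2) = j := by lia
      rw [hj2] at hL
      rw [if_pos hj2.symm, hL]
      ring
    · have hj2 : 2 * (j / 2) + 1 = j := by lia
      rw [hj2] at hR
      rw [if_neg (by lia), if_pos hj2.symm, hR]
      ring
  · intro i hi hne
    have hi' : i < 2 ^ n := by simpa using hi
    rw [haar, hmem _ (by lia), hmem _ (by lia), if_neg (by lia), if_neg (by lia)]
    ring

/-- The telescoped product: on a dyadic interval `J` of scale `k`, the density built from the
scales below `k` is the constant `μ(J) / |J|`. -/
lemma mul_prod_eq {μ : Measure ℝ} {a : ℕ → ℕ → ℝ} (ha : IsProdCoeff μ a) {k : ℕ} {x : ℝ} :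
    ∀ {j : ℕ}, j < 2 ^ k → x ∈ dInt k j →
      (μ (Icc 0 1)).toReal *
          ∏ m ∈ Finset.range k, ∏ i ∈ Finset.range (2 ^ m), (1 + a m i * haar m i x)
        = 2 ^ k * (μ (dInt k j)).toReal := by
  induction k with
  | zero =>
    intro j hj _
    obtain rfl : j = 0 := by simpa using hj
    simp [dInt_zero]
  | succ k ih =>
    intro j hj hx
    rw [Finset.prod_range_succ, ← mul_assoc,
      ih (j := j / 2) (by rw [pow_succ] at hj; lia) (dInt_succ_subset k j hx), pow_succ]
    linear_combination 2 ^ k * prod_scale_mul ha hj hx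

lemma partialMeasure_dInt {μ : Measure ℝ} [IsFiniteMeasure μ] {a : ℕ → ℕ → ℝ}
    (ha : IsProdCoeff μ a) (n : ℕ) {j : ℕ} (hj : j < 2 ^ (n + 1)) :
    partialMeasure (μ (Icc 0 1)).toReal a n (dInt (n + 1) j) = μ (dInt (n + 1) j) := by
  have hm := measurableSet_dInt (n + 1) j
  rw [partialMeasure, withDensity_apply _ hm, dy, Measure.restrict_restrict hm,
    inter_eq_self_of_subset_left (dInt_subset_unit hj),
    setLIntegral_congr_fun (f := fun y =>
      ENNReal.ofReal ((μ (Icc 0 1)).toReal * partialProd a n y)) (g := fun _ =>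
      ENNReal.ofReal (2 ^ (n + 1) * (μ (dInt (n + 1) j)).toReal)) hm
      (fun x hx => congrArg ENNReal.ofReal (mul_prod_eq ha hj hx)),
    setLIntegral_const, volume_dInt, ← ENNReal.ofReal_mul (by positivity)]
  rw [show (2 : ℝ) ^ (n + 1) * (μ (dInt (n + 1) j)).toReal * (1 / 2 ^ (n + 1))
    = (μ (dInt (n + 1) j)).toReal by field_simp]
  exact ENNReal.ofReal_toReal (measure_ne_top _ _)

lemma partialMeasure_compl (M : ℝ) (a : ℕ → ℕ → ℝ) (n : ℕ) :
    partialMeasure M a n (Icc 0 1)ᶜ = 0 := by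
  refine withDensity_absolutelyContinuous _ _ ?_
  rw [dy, Measure.restrict_apply measurableSet_Icc.compl]
  simp

lemma measure_unit_eq_sum (ν : Measure ℝ) (k : ℕ) :
    ν (Icc 0 1) = ∑ j ∈ Finset.range (2 ^ k), ν (dInt k j) := by
  rw [← iUnion_dInt k, measure_biUnion_finset (pairwise_disjoint_dInt k)
    fun j _ => measurableSet_dInt k j]

/-- The Riemann sum of `f` over the dyadic intervals of scale `k`, sampled at left endpoints,
approximates the integral of `f` up to the oscillation of `f` times the total mass. -/
lemma abs_integral_sub_sum_le {ν : Measure ℝ} [IsFiniteMeasure ν] (hν : ν (Icc (0 : ℝ) 1)ᶜ = 0)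
    {f : ℝ → ℝ} (hf : ContinuousOn f (Icc 0 1)) {k : ℕ} {ε : ℝ}
    (hosc : ∀ j < 2 ^ k, ∀ x ∈ dInt k j, |f x - f (j / 2 ^ k)| ≤ ε) :
    |∫ x, f x ∂ν - ∑ j ∈ Finset.range (2 ^ k), f (j / 2 ^ k) * (ν (dInt k j)).toReal|
      ≤ ε * (ν (Icc 0 1)).toReal := by
  have hres : ν.restrict (Icc 0 1) = ν := Measure.restrict_eq_self_of_ae_mem hν
  have hint : IntegrableOn f (Icc 0 1) ν := hf.integrableOn_compact isCompact_Icc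
  have hintj : ∀ j ∈ Finset.range (2 ^ k), IntegrableOn f (dInt k j) ν := fun j hj =>
    hint.mono_set (dInt_subset_unit (by simpa using hj))
  have hsplit : ∫ x, f x ∂ν = ∑ j ∈ Finset.range (2 ^ k), ∫ x in dInt k j, f x ∂ν := by
    conv_lhs => rw [← hres, ← iUnion_dInt k]
    exact integral_biUnion_finset _ (fun j _ => measurableSet_dInt k j)
      (pairwise_disjoint_dInt k) hintj
  rw [hsplit, ← Finset.sum_sub_distrib, measure_unit_eq_sum ν k,
    ENNReal.toReal_sum fun j _ => measure_ne_top _ _, Finset.mul_sum]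
  refine (Finset.abs_sum_le_sum_abs _ _).trans (Finset.sum_le_sum fun j hj => ?_)
  have hconst : ∫ x in dInt k j, f x ∂ν - f (j / 2 ^ k) * (ν (dInt k j)).toReal
      = ∫ x in dInt k j, (f x - f (j / 2 ^ k)) ∂ν := by
    rw [integral_sub (hintj j hj) (integrable_const _), setIntegral_const, smul_eq_mul, mul_comm]
    rfl
  rw [hconst]
  exact norm_setIntegral_le_of_norm_le_const (f := fun x => f x - f (j / 2 ^ k))
    (measure_lt_top _ _) (hosc j (by simpa using hj))

/-- For a finite nonnegative Borel measure `μ` on `[0,1]` with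
`μ([0,1]) > 0` and product coefficients `a`, the partial product measures
`μ_n = μ([0,1])·∏_{I ∈ B_n}(1 + a_I h_I) dy` converge weak-star to `μ`. -/
theorem stmt_0 (μ : Measure ℝ) [IsFiniteMeasure μ]
    (hsupp : μ (Icc (0 : ℝ) 1)ᶜ = 0) (hpos : 0 < μ (Icc (0 : ℝ) 1))
    (a : ℕ → ℕ → ℝ) (ha : IsProdCoeff μ a) :
    WeakStarTendsto (partialMeasure (μ (Icc (0 : ℝ) 1)).toReal a) μ := by
  intro f hf
  set M := (μ (Icc (0 : ℝ) 1)).toReal with hM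
  have hM0 : 0 < M := ENNReal.toReal_pos hpos.ne' (measure_ne_top _ _)
  rw [Metric.tendsto_atTop]
  intro ε hε
  -- Two Riemann sum errors of size `η * M` with `η = ε / (4 * M)` add up to `ε / 2`.
  obtain ⟨δ, hδ, hfδ⟩ := Metric.uniformContinuousOn_iff.mp
    (isCompact_Icc.uniformContinuousOn_of_continuous hf) (ε / (4 * M)) (by positivity)
  obtain ⟨N, hN⟩ := exists_pow_lt_of_lt_one hδ (by norm_num : (1 / 2 : ℝ) < 1)
  refine ⟨N, fun n hn => ?_⟩
  have hsmall : (1 : ℝ) / 2 ^ (n + 1) < δ := by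
    rw [← one_div_pow]
    exact (pow_le_pow_of_le_one (by norm_num) (by norm_num) (by lia)).trans_lt hN
  have hosc : ∀ j < 2 ^ (n + 1), ∀ x ∈ dInt (n + 1) j,
      |f x - f (j / 2 ^ (n + 1))| ≤ ε / (4 * M) := by
    intro j hj x hx
    have hb := dInt_subset_Icc _ _ hx
    have hleft : (j : ℝ) / 2 ^ (n + 1) ∈ dInt (n + 1) j :=
      Ico_subset_dInt _ _ ⟨le_rfl, by gcongr; linarith⟩
    refine (hfδ x (dInt_subset_unit hj hx) _ (dInt_subset_unit hj hleft) ?_).le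
    rw [Real.dist_eq, abs_of_nonneg (sub_nonneg.mpr hb.1)]
    have := hb.2
    rw [add_div] at this
    linarith
  have hmass : ∀ j ∈ Finset.range (2 ^ (n + 1)),
      partialMeasure M a n (dInt (n + 1) j) = μ (dInt (n + 1) j) := fun j hj =>
    partialMeasure_dInt ha n (by simpa using hj)
  have htot : partialMeasure M a n (Icc 0 1) = μ (Icc 0 1) := by
    rw [measure_unit_eq_sum _ (n + 1), measure_unit_eq_sum μ (n + 1), Finset.sum_congr rfl hmass]
  have hcompl := partialMeasure_compl M a n
  have : IsFiniteMeasure (partialMeasure M a n) := by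
    refine ⟨?_⟩
    rw [← measure_add_measure_compl (measurableSet_Icc (a := (0 : ℝ)) (b := 1)), htot, hcompl,
      add_zero]
    exact measure_lt_top _ _
  have h1 := abs_integral_sub_sum_le hcompl hf hosc
  have h2 := abs_integral_sub_sum_le hsupp hf hosc
  rw [htot, Finset.sum_congr rfl fun j hj => by rw [hmass j hj], ← hM] at h1
  rw [← hM] at h2
  have hε4 : ε / (4 * M) * M = ε / 4 := by field_simp
  rw [hε4, abs_le] at h1 h2
  rw [Real.dist_eq, abs_lt]
  constructor <;> linarith [h1.1, h1.2, h2.1, h2.2]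

end
end

section
/- For any assignment of parameters a_I ∈ [−1,1] to the dyadic intervals of [0,1], let μ_k denote the Borel measure with density ∏_{I ∈ B_k}(1 + a_I h_I) with respect to Lebesgue measure. Then for all m ≥ n ≥ 0 and every dyadic interval J of scale at most n+1, μ_m(J) = μ_n(J); that is, the partial product measures are consistent on the dyadic intervals already resolved at stage n. -/
/-!
The factor of the density at scale `n + 1` has mean one on every interval `I(n+1,i)`: the
scale-`n` density is a constant `c` there, since dyadic intervals are nested, and the next density
is `c (1 + a)` on the left half and `c (1 - a)` on the right half (`partialProd_succ`). Hence
`μ_{n+1}` and `μ_n` agree on intervals of scale `n + 1`, and, splitting an interval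
into its two children, on all coarser ones. The hypothesis `|a_I| ≤ 1` ensures that the densities
are nonnegative, so that the truncation in `ENNReal.ofReal` is harmless.
-/

open MeasureTheory Set Filter Topology

noncomputable section
attribute [local instance] Classical.propDecidable

lemma left_mem_dInt (n i : ℕ) : (i : ℝ) / 2 ^ n ∈ dInt n i := by
  have h : (i : ℝ) / 2 ^ n < (i + 1) / 2 ^ n := by gcongr; linarith
  unfold dInt; split_ifs
  exacts [⟨le_rfl, h.le⟩, ⟨le_rfl, h⟩]

/-- Distinct dyadic intervals of one scale are disjoint. -/
lemma dInt_index_unique {n i k : ℕ} (hi : i < 2 ^ n) (hk : k < 2 ^ n) {x : ℝ}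
    (hxi : x ∈ dInt n i) (hxk : x ∈ dInt n k) : i = k := by
  wlog h : i < k generalizing i k
  · rcases lt_trichotomy i k with h1 | h1 | h1
    · exact this hi hk hxi hxk h1
    · exact h1
    · exact (this hk hi hxk hxi h1).symm
  exfalso
  rw [dInt, if_neg (by omega)] at hxi
  have h1 : ((i : ℝ) + 1) / 2 ^ n ≤ k / 2 ^ n := by gcongr; exact_mod_cast h
  linarith [hxi.2, (dInt_subset_Icc n k hxk).1]

lemma dInt_eq_union (n i : ℕ) :
    dInt n i = dInt (n + 1) (2 * i) ∪ dInt (n + 1) (2 * i + 1) := by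
  have e0 : ((2 * i : ℕ) : ℝ) / 2 ^ (n + 1) = i / 2 ^ n := by
    push_cast; rw [pow_succ]; field_simp
  have e1 : (((2 * i + 1 : ℕ) : ℝ) + 1) / 2 ^ (n + 1) = (i + 1) / 2 ^ n := by
    push_cast; rw [pow_succ]; field_simp; ring
  have e2 : (((2 * i : ℕ) : ℝ) + 1) / 2 ^ (n + 1) = ((2 * i + 1 : ℕ) : ℝ) / 2 ^ (n + 1) := by
    push_cast; rfl
  have l1 : (i : ℝ) / 2 ^ n ≤ ((2 * i + 1 : ℕ) : ℝ) / 2 ^ (n + 1) := by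
    rw [← e0]; gcongr; omega
  have l2 : ((2 * i + 1 : ℕ) : ℝ) / 2 ^ (n + 1) ≤ (i + 1) / 2 ^ n := by
    rw [← e1]; gcongr; linarith
  have hp : 2 ^ (n + 1) = 2 * 2 ^ n := pow_succ' 2 n
  unfold dInt
  rw [if_neg (show ¬ 2 * i + 1 = 2 ^ (n + 1) by omega), e0, e1, e2]
  by_cases h : i + 1 = 2 ^ n
  · rw [if_pos h, if_pos (by omega), Ico_union_Icc_eq_Icc l1 l2]
  · rw [if_neg h, if_neg (by omega), Ico_union_Ico_eq_Ico l1 l2]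

lemma dInt_subset_ancestor (n d j : ℕ) : dInt (n + d) j ⊆ dInt n (j / 2 ^ d) := by
  induction d generalizing j with
  | zero => simp
  | succ d ih =>
    have h : dInt (n + d + 1) j ⊆ dInt (n + d) (j / 2) := by
      rw [dInt_eq_union (n + d) (j / 2)]
      rcases Nat.even_or_odd' j with ⟨k, rfl | rfl⟩
      · rw [show 2 * k / 2 = k by omega]; exact subset_union_left
      · rw [show (2 * k + 1) / 2 = k by omega]; exact subset_union_right
    rw [pow_succ', ← Nat.div_div_eq_div_mul]
    exact h.trans (ih _)

/-- A dyadic interval is either contained in or disjoint from any dyadic interval of coarser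
scale. -/
lemma mem_dInt_congr {n s j k : ℕ} (hns : n ≤ s) (hj : j < 2 ^ s) (hk : k < 2 ^ n) {x y : ℝ}
    (hx : x ∈ dInt s j) (hy : y ∈ dInt s j) : x ∈ dInt n k ↔ y ∈ dInt n k := by
  obtain ⟨d, rfl⟩ := Nat.exists_eq_add_of_le hns
  have hlt : j / 2 ^ d < 2 ^ n := Nat.div_lt_of_lt_mul (by rwa [← pow_add, add_comm d n])
  have hx' := dInt_subset_ancestor n d j hx
  have hy' := dInt_subset_ancestor n d j hy
  constructor <;> intro h
  · rwa [dInt_index_unique hk hlt h hx']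
  · rwa [dInt_index_unique hk hlt h hy']

lemma partialProd_congr (a : ℕ → ℕ → ℝ) {n j : ℕ} (hj : j < 2 ^ (n + 1)) {x y : ℝ}
    (hx : x ∈ dInt (n + 1) j) (hy : y ∈ dInt (n + 1) j) :
    partialProd a n x = partialProd a n y := by
  unfold partialProd
  refine Finset.prod_congr rfl fun m hm => Finset.prod_congr rfl fun i hi => ?_
  rw [Finset.mem_range] at hm hi
  have hp : 2 ^ (m + 1) = 2 * 2 ^ m := pow_succ' 2 m
  have h1 := mem_dInt_congr (n := m + 1) (k := 2 * i) (by omega) hj (by omega) hx hy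
  have h2 := mem_dInt_congr (n := m + 1) (k := 2 * i + 1) (by omega) hj (by omega) hx hy
  simp only [haar, h1, h2]

lemma partialProd_nonneg {a : ℕ → ℕ → ℝ} (ha : ∀ n i, i < 2 ^ n → a n i ∈ Icc (-1 : ℝ) 1)
    (n : ℕ) (x : ℝ) : 0 ≤ partialProd a n x := by
  refine Finset.prod_nonneg fun m _ => Finset.prod_nonneg fun i hi => ?_
  obtain ⟨h1, h2⟩ := ha m i (Finset.mem_range.1 hi)
  unfold haar
  split_ifs <;> linarith

/-- On `I(n+1,j)` only the Haar function of that interval contributes a new factor. -/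
lemma partialProd_succ (a : ℕ → ℕ → ℝ) {n j : ℕ} (hj : j < 2 ^ (n + 1)) {x : ℝ}
    (hx : x ∈ dInt (n + 1) j) :
    partialProd a (n + 1) x = partialProd a n x * (1 + a (n + 1) j * haar (n + 1) j x) := by
  unfold partialProd
  rw [Finset.prod_range_succ _ (n + 1)]
  congr 1
  refine Finset.prod_eq_single_of_mem j (Finset.mem_range.2 hj) fun i hi hij => ?_
  have hxi : x ∉ dInt (n + 1) i := fun h =>
    hij (dInt_index_unique (Finset.mem_range.1 hi) hj h hx)
  rw [dInt_eq_union, mem_union, not_or] at hxi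
  simp [haar, hxi.1, hxi.2]

lemma partialMeasure_of_const (a : ℕ → ℕ → ℝ) {n s j : ℕ} (hj : j < 2 ^ s) {c : ℝ}
    (hc : ∀ x ∈ dInt s j, partialProd a n x = c) :
    partialMeasure 1 a n (dInt s j) = ENNReal.ofReal c * ENNReal.ofReal (1 / 2 ^ s) := by
  have hm := measurableSet_dInt s j
  rw [partialMeasure, withDensity_apply _ hm, dy, Measure.restrict_restrict hm,
    inter_eq_left.2 (dInt_subset_unit hj),
    setLIntegral_congr_fun hm (g := fun _ => ENNReal.ofReal c)
      (fun x hx => by simp only [one_mul, hc x hx]),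
    setLIntegral_const, volume_dInt]

lemma measure_dInt_split (μ : Measure ℝ) {n i : ℕ} (hi : i < 2 ^ n) :
    μ (dInt n i) = μ (dInt (n + 1) (2 * i)) + μ (dInt (n + 1) (2 * i + 1)) := by
  have hp : 2 ^ (n + 1) = 2 * 2 ^ n := pow_succ' 2 n
  rw [dInt_eq_union, measure_union _ (measurableSet_dInt _ _)]
  refine Set.disjoint_left.2 fun x h1 h2 => ?_
  have := dInt_index_unique (by omega) (by omega) h1 h2
  omega

/-- Consistency on the intervals on which the scale-`n` density is constant. -/
lemma partialMeasure_succ_cell {a : ℕ → ℕ → ℝ}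
    (ha : ∀ n i, i < 2 ^ n → a n i ∈ Icc (-1 : ℝ) 1) {n j : ℕ} (hj : j < 2 ^ (n + 1)) :
    partialMeasure 1 a (n + 1) (dInt (n + 1) j) = partialMeasure 1 a n (dInt (n + 1) j) := by
  have hp : 2 ^ (n + 1 + 1) = 2 * 2 ^ (n + 1) := pow_succ' 2 (n + 1)
  set c := partialProd a n ((j : ℝ) / 2 ^ (n + 1)) with hcdef
  have hc0 : 0 ≤ c := partialProd_nonneg ha _ _
  have hc : ∀ x ∈ dInt (n + 1) j, partialProd a n x = c := fun x hx =>
    partialProd_congr a hj hx (left_mem_dInt _ _)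
  obtain ⟨h1, h2⟩ := ha (n + 1) j hj
  have hL : ∀ x ∈ dInt (n + 1 + 1) (2 * j), partialProd a (n + 1) x = c * (1 + a (n + 1) j) := by
    intro x hx
    have hx' : x ∈ dInt (n + 1) j := by rw [dInt_eq_union]; exact Or.inl hx
    rw [partialProd_succ a hj hx', hc x hx', haar, if_pos hx, mul_one]
  have hR : ∀ x ∈ dInt (n + 1 + 1) (2 * j + 1),
      partialProd a (n + 1) x = c * (1 - a (n + 1) j) := by
    intro x hx
    have hx' : x ∈ dInt (n + 1) j := by rw [dInt_eq_union]; exact Or.inr hx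
    have hn : x ∉ dInt (n + 1 + 1) (2 * j) := fun h => by
      have := dInt_index_unique (by omega) (by omega) h hx
      omega
    rw [partialProd_succ a hj hx', hc x hx', haar, if_neg hn, if_pos hx]
    ring
  rw [measure_dInt_split _ hj, partialMeasure_of_const a (by omega) hL,
    partialMeasure_of_const a (by omega) hR, partialMeasure_of_const a hj hc, ← add_mul,
    ← ENNReal.ofReal_add (mul_nonneg hc0 (by linarith)) (mul_nonneg hc0 (by linarith)),
    ← ENNReal.ofReal_mul (by nlinarith), ← ENNReal.ofReal_mul hc0]
  congr 1
  rw [pow_succ _ (n + 1)]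
  field_simp
  ring

lemma partialMeasure_succ {a : ℕ → ℕ → ℝ}
    (ha : ∀ n i, i < 2 ^ n → a n i ∈ Icc (-1 : ℝ) 1) {n s j : ℕ} (hs : s ≤ n + 1)
    (hj : j < 2 ^ s) :
    partialMeasure 1 a (n + 1) (dInt s j) = partialMeasure 1 a n (dInt s j) := by
  induction hs using Nat.decreasingInduction generalizing j with
  | self => exact partialMeasure_succ_cell ha hj
  | of_succ s _ ih =>
    have hp : 2 ^ (s + 1) = 2 * 2 ^ s := pow_succ' 2 s
    rw [measure_dInt_split _ hj, measure_dInt_split _ hj, ih (by omega), ih (by omega)]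

/-- The partial product measures are consistent: for `m ≥ n` and
any dyadic interval `J = I(s,j)` of scale `s ≤ n+1`, `μ_m(J) = μ_n(J)`. -/
theorem stmt_4 (a : ℕ → ℕ → ℝ) (ha : ∀ n i, i < 2 ^ n → a n i ∈ Icc (-1 : ℝ) 1)
    (m n : ℕ) (hmn : n ≤ m) (s j : ℕ) (hs : s ≤ n + 1) (hj : j < 2 ^ s) :
    partialMeasure 1 a m (dInt s j) = partialMeasure 1 a n (dInt s j) := by
  induction m, hmn using Nat.le_induction with
  | base => rfl
  | succ m hnm ih => rw [partialMeasure_succ ha (by omega) hj, ih]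

end
end

section
/- Let x ∈ [0,1) and define parameters a_I for the dyadic intervals of [0,1] by: a_I = 1 if x ∈ L(I), a_I = −1 if x ∈ R(I), and a_I = 0 if x ∉ I. Then the Borel measures μ_n with density ∏_{I ∈ B_n}(1 + a_I h_I) with respect to Lebesgue measure converge weak-star to the Dirac measure δ_x at x; that is, δ_x = ∏_{I}(1 + a_I h_I) dy as a weak-star limit. -/
/-!
Write `dIdx n y = ⌊2 ^ n * y⌋₊`, the index of the scale-`n` dyadic interval containing `y ∈ [0,1)`.
At each scale `m` only the factor with `i = dIdx m y` can differ from `1`, and it does so only when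
`x` and `y` share the interval `I(m,i)`; it is then `2` if they also lie in the same child and `0`
otherwise (`inner_prod_eq`). The product therefore telescopes to `2 ^ (n+1)` times the indicator of
the scale-`(n+1)` dyadic interval containing `x` (`partialProd_eq`). So the `n`-th measure is the
uniform probability measure on that interval (`partialMeasure_eq`), whose length tends to `0`, and
continuity of the test function at `x` gives the convergence.
-/

open MeasureTheory Set Filter Topology

noncomputable section
attribute [local instance] Classical.propDecidable

/-- The index `i` of the dyadic interval `I(n,i)` containing `y`, for `y ∈ [0,1)`. -/
def dIdx (n : ℕ) (y : ℝ) : ℕ := ⌊2 ^ n * y⌋₊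

lemma dIdx_lt {y : ℝ} (hy : y ∈ Ico (0 : ℝ) 1) (n : ℕ) : dIdx n y < 2 ^ n := by
  have hp : (0 : ℝ) < 2 ^ n := by positivity
  unfold dIdx
  rw [Nat.floor_lt (mul_nonneg hp.le hy.1)]
  push_cast
  nlinarith [hy.2]

lemma dIdx_succ_div (n : ℕ) (y : ℝ) : dIdx (n + 1) y / 2 = dIdx n y := by
  unfold dIdx
  rw [← Nat.floor_div_ofNat]
  congr 1
  rw [pow_succ]
  ring

lemma mem_Ico_iff_dIdx {y : ℝ} (hy : 0 ≤ y) (n i : ℕ) :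
    y ∈ Ico ((i : ℝ) / 2 ^ n) ((i + 1) / 2 ^ n) ↔ dIdx n y = i := by
  have hp : (0 : ℝ) < 2 ^ n := by positivity
  unfold dIdx
  rw [Nat.floor_eq_iff (mul_nonneg hp.le hy), mem_Ico, div_le_iff₀ hp, lt_div_iff₀ hp,
    mul_comm y]

/-- Away from the endpoint `1`, the closed last interval behaves like a half-open one. -/
lemma mem_dInt_iff {y : ℝ} (hy : y ∈ Ico (0 : ℝ) 1) (n i : ℕ) :
    y ∈ dInt n i ↔ dIdx n y = i := by
  rw [← mem_Ico_iff_dIdx hy.1]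
  unfold dInt
  split_ifs with h
  · have h1 : ((i : ℝ) + 1) / 2 ^ n = 1 := by
      rw [div_eq_one_iff_eq (by positivity)]
      exact_mod_cast h
    rw [h1]
    exact ⟨fun h => ⟨h.1, hy.2⟩, fun h => ⟨h.1, h.2.le⟩⟩
  · rfl

/-- The scale-`m` factor of the product. -/
lemma inner_prod_eq {x y : ℝ} (hx : x ∈ Ico (0 : ℝ) 1) (hy : y ∈ Ico (0 : ℝ) 1)
    {a : ℕ → ℕ → ℝ}
    (ha : ∀ n i, i < 2 ^ n →
      a n i = if x ∈ dInt (n + 1) (2 * i) then (1 : ℝ)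
        else if x ∈ dInt (n + 1) (2 * i + 1) then -1 else 0) (m : ℕ) :
    ∏ i ∈ Finset.range (2 ^ m), (1 + a m i * haar m i y) =
      if dIdx m x = dIdx m y then (if dIdx (m + 1) x = dIdx (m + 1) y then 2 else 0) else 1 := by
  have hx' := dIdx_succ_div m x
  have hy' := dIdx_succ_div m y
  rw [Finset.prod_eq_single (dIdx m y)]
  · rw [ha m _ (dIdx_lt hy m)]
    simp only [haar, mem_dInt_iff hx, mem_dInt_iff hy]
    split_ifs <;> first | omega | norm_num
  · intro i _ hi
    have : haar m i y = 0 := by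
      simp only [haar, mem_dInt_iff hy]
      rw [if_neg (by omega), if_neg (by omega)]
    rw [this]
    ring
  · intro h
    exact absurd (Finset.mem_range.2 (dIdx_lt hy m)) h

lemma partialProd_eq {x y : ℝ} (hx : x ∈ Ico (0 : ℝ) 1) (hy : y ∈ Ico (0 : ℝ) 1)
    {a : ℕ → ℕ → ℝ}
    (ha : ∀ n i, i < 2 ^ n →
      a n i = if x ∈ dInt (n + 1) (2 * i) then (1 : ℝ)
        else if x ∈ dInt (n + 1) (2 * i + 1) then -1 else 0) (n : ℕ) :
    partialProd a n y = if dIdx (n + 1) x = dIdx (n + 1) y then 2 ^ (n + 1) else 0 := by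
  unfold partialProd
  simp only [inner_prod_eq hx hy ha]
  induction n with
  | zero =>
    have h0 : dIdx 0 x = dIdx 0 y := by
      have h1 := dIdx_lt hx 0
      have h2 := dIdx_lt hy 0
      rw [pow_zero] at h1 h2
      omega
    simp [h0]
  | succ n ih =>
    rw [Finset.prod_range_succ, ih]
    have hx' := dIdx_succ_div (n + 1) x
    have hy' := dIdx_succ_div (n + 1) y
    split_ifs with h1 h2 h2
    · ring
    · ring
    · -- a common interval at the finer scale forces a common interval at the coarser one
      exact absurd (by rw [← hx', ← hy', h2]) h1
    · ring

/-- The dyadic interval of scale `n` containing `x`, in half-open form. -/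
def dIco (n : ℕ) (x : ℝ) : Set ℝ :=
  Ico ((dIdx n x : ℝ) / 2 ^ n) ((dIdx n x + 1) / 2 ^ n)

lemma dIco_subset {x : ℝ} (hx : x ∈ Ico (0 : ℝ) 1) (n : ℕ) : dIco n x ⊆ Icc 0 1 := by
  have hk : ((dIdx n x : ℝ) + 1) / 2 ^ n ≤ 1 := by
    rw [div_le_one (by positivity)]
    exact_mod_cast dIdx_lt hx n
  exact fun y hy => ⟨le_trans (by positivity) hy.1, hy.2.le.trans hk⟩

lemma volume_dIco (n : ℕ) (x : ℝ) : volume (dIco n x) = ENNReal.ofReal (2 ^ n)⁻¹ := by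
  rw [dIco, Real.volume_Ico]
  congr 1
  ring

lemma partialMeasure_eq {x : ℝ} (hx : x ∈ Ico (0 : ℝ) 1) {a : ℕ → ℕ → ℝ}
    (ha : ∀ n i, i < 2 ^ n →
      a n i = if x ∈ dInt (n + 1) (2 * i) then (1 : ℝ)
        else if x ∈ dInt (n + 1) (2 * i + 1) then -1 else 0) (n : ℕ) :
    partialMeasure 1 a n =
      ENNReal.ofReal (2 ^ (n + 1)) • volume.restrict (dIco (n + 1) x) := by
  have hae : (fun y => ENNReal.ofReal (1 * partialProd a n y)) =ᵐ[dy]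
      (dIco (n + 1) x).indicator (fun _ => ENNReal.ofReal (2 ^ (n + 1))) := by
    -- the density formula is only claimed on `[0,1)`; the endpoint `1` is a null set
    have h1 : ∀ᵐ y ∂dy, y ≠ 1 := by
      unfold dy
      exact ae_restrict_of_ae (by simp [ae_iff])
    have h2 : ∀ᵐ y ∂dy, y ∈ Icc (0 : ℝ) 1 := ae_restrict_mem measurableSet_Icc
    filter_upwards [h1, h2] with y hy1 hy2
    have hy : y ∈ Ico (0 : ℝ) 1 := ⟨hy2.1, lt_of_le_of_ne hy2.2 hy1⟩
    rw [partialProd_eq hx hy ha, one_mul, indicator_apply]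
    have : y ∈ dIco (n + 1) x ↔ dIdx (n + 1) y = dIdx (n + 1) x :=
      mem_Ico_iff_dIdx hy.1 _ _
    by_cases h : dIdx (n + 1) x = dIdx (n + 1) y
    · rw [if_pos h, if_pos (this.2 h.symm)]
    · rw [if_neg h, if_neg (fun h' => h (this.1 h').symm), ENNReal.ofReal_zero]
  unfold partialMeasure
  rw [withDensity_congr_ae hae, withDensity_indicator (by exact measurableSet_Ico),
    withDensity_const, dy, Measure.restrict_restrict (by exact measurableSet_Ico),
    inter_eq_left.2 (dIco_subset hx _)]

/-- For `x ∈ [0,1)` and parameters `a_I = 1` if `x ∈ L(I)`,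
`a_I = −1` if `x ∈ R(I)`, `a_I = 0` if `x ∉ I`, the partial product measures
`∏_{I ∈ B_n}(1 + a_I h_I) dy` converge weak-star to the Dirac measure `δ_x`. -/
theorem stmt_11 (x : ℝ) (hx : x ∈ Ico (0 : ℝ) 1) (a : ℕ → ℕ → ℝ)
    (ha : ∀ n i, i < 2 ^ n →
      a n i = if x ∈ dInt (n + 1) (2 * i) then (1 : ℝ)
        else if x ∈ dInt (n + 1) (2 * i + 1) then -1 else 0) :
    WeakStarTendsto (partialMeasure 1 a) (Measure.dirac x) := by
  intro f hf
  rw [integral_dirac, Metric.tendsto_atTop]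
  intro ε hε
  have hxI : x ∈ Icc (0 : ℝ) 1 := ⟨hx.1, hx.2.le⟩
  obtain ⟨δ, hδ, hfδ⟩ := Metric.continuousOn_iff.1 hf x hxI (ε / 2) (half_pos hε)
  obtain ⟨N, hN⟩ := exists_pow_lt_of_lt_one hδ (by norm_num : (1 / 2 : ℝ) < 1)
  refine ⟨N, fun n hn => ?_⟩
  rw [partialMeasure_eq hx ha, integral_smul_measure, ENNReal.toReal_ofReal (by positivity)]
  set J := dIco (n + 1) x with hJ
  have hp : (0 : ℝ) < 2 ^ (n + 1) := by positivity
  have hvol : volume.real J = (2 ^ (n + 1))⁻¹ := by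
    rw [measureReal_def, volume_dIco, ENNReal.toReal_ofReal (by positivity)]
  have hfin : volume J < ⊤ := by rw [volume_dIco]; exact ENNReal.ofReal_lt_top
  have hxJ : x ∈ J := (mem_Ico_iff_dIdx hx.1 _ _).2 rfl
  have hlen : ((2 : ℝ) ^ (n + 1))⁻¹ < δ := by
    refine lt_of_le_of_lt ?_ hN
    rw [← inv_pow, one_div]
    exact pow_le_pow_of_le_one (by norm_num) (by norm_num) (by omega)
  have hint : IntegrableOn f J := hf.integrableOn_Icc.mono_set (dIco_subset hx _)
  have hbound : ‖∫ y in J, (f y - f x)‖ ≤ ε / 2 * volume.real J := by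
    refine norm_setIntegral_le_of_norm_le_const hfin fun y hy => ?_
    refine (hfδ y (dIco_subset hx _ hy) ?_).le
    refine lt_of_le_of_lt ?_ hlen
    have hd : ((dIdx (n + 1) x : ℝ) + 1) / 2 ^ (n + 1)
        = dIdx (n + 1) x / 2 ^ (n + 1) + (2 ^ (n + 1))⁻¹ := by ring
    have h1 := hy.2
    have h2 := hxJ.2
    rw [hd] at h1 h2
    rw [Real.dist_eq, abs_le]
    constructor <;> linarith [hy.1, hxJ.1]
  rw [integral_sub hint (integrableOn_const hfin.ne), setIntegral_const, hvol, smul_eq_mul]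
    at hbound
  have heq : (2 : ℝ) ^ (n + 1) • (∫ y in J, f y) - f x =
      2 ^ (n + 1) * ((∫ y in J, f y) - (2 ^ (n + 1))⁻¹ * f x) := by
    rw [smul_eq_mul]
    field_simp
  rw [dist_eq_norm, heq, norm_mul, Real.norm_of_nonneg hp.le]
  calc _ ≤ 2 ^ (n + 1) * (ε / 2 * (2 ^ (n + 1))⁻¹) := by gcongr
    _ = ε / 2 := by field_simp
    _ < ε := half_lt_self hε

end
end
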